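/- Let 0 < β₀ < 1 and let λ ∈ ℂ with Re λ < 0. Then there exists T₀ > 1 such that for every t₀ ≥ T₀ the following holds: for every b ∈ ℂ that lies in the image of the half-open interval [β₀, 1) under the map ρ ↦ E_ρ(λ·t₀^ρ), there exists a unique ρ* ∈ [β₀, 1] such that E_{ρ*}(λ·t₀^{ρ*}) = b. -/

import Mathlib

/-- The (one-parameter) Mittag-Leffler function `E_β(z) = ∑ₖ zᵏ / Γ(βk + 1)`. -/
noncomputable def mittagLeffler (β : ℝ) (z : ℂ) : ℂ :=
  ∑' k : ℕ, z ^ k / Complex.Gamma (β * k + 1)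

/-!
Summing the geometric series under the inverse Laplace transform of `s ^ (-(ρ * k + 1))` writes
`E_ρ(l * t ^ ρ)` as the Bromwich integral of `s⁻¹ * u / (u - l)`, where `u = (s / t) ^ ρ`. Since
`l * u / (u - l) = -u + u ^ 2 / (u - l)`, this gives
`l * E_ρ(l * t ^ ρ) = -t ^ (-ρ) / Γ(1 - ρ) + R(ρ)` with `R` the Bromwich integral of
`s⁻¹ * u ^ 2 / (u - l)`.

As `Re l < 0`, the point `l` stays at positive distance from a sector slightly larger than the right
half-plane, and `u` lies in that sector for `ρ ≤ 1`. There the integrand of `R` is of order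
`t ^ (-2 * ρ)`, and each derivative in `ρ` costs only a factor `log t`, so that
`|R ρ₂ - R ρ₁| ≤ C * t ^ (-2 * ρ₁) * log t * (ρ₂ - ρ₁)`. On the other hand `1 / Γ` increases on
`[0, 1]` at a rate of at least the Euler–Mascheroni constant `γ`, so the leading terms differ by at
least `γ * t ^ (-ρ₁) * (ρ₂ - ρ₁)`, which dominates once `t` is large.
-/

open Complex Filter MeasureTheory Set
open scoped FourierTransform Real Topology

section Gamma

open Real (eulerMascheroniConstant)

lemma Gamma_le_one_of_mem_Icc {x : ℝ} (hx : x ∈ Icc (1 : ℝ) 2) : Real.Gamma x ≤ 1 := by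
  have h := Real.convexOn_Gamma.le_max_of_mem_Icc (mem_Ioi.2 one_pos) (mem_Ioi.2 two_pos) hx
  rwa [Real.Gamma_one, Real.Gamma_two, max_self] at h

lemma Gamma_sub_Gamma_le {x y : ℝ} (hx : 0 < x) (hxy : x ≤ y) (hy : y ≤ 2) :
    Real.Gamma y - Real.Gamma x ≤ (1 - eulerMascheroniConstant) * (y - x) := by
  have hdiff : DifferentiableOn ℝ Real.Gamma (Ioi 0) := Real.differentiableOn_Gamma_Ioi
  have hderiv_two : deriv Real.Gamma 2 = 1 - eulerMascheroniConstant := by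
    have h := (Real.hasDerivAt_Gamma_nat 1).deriv
    norm_num at h
    linarith
  have hmono : MonotoneOn (deriv Real.Gamma) (Ioi 0) :=
    Real.convexOn_Gamma.monotoneOn_deriv fun u hu ↦ hdiff.differentiableAt (Ioi_mem_nhds hu)
  have hsub : Icc x y ⊆ Ioi 0 := fun u hu ↦ hx.trans_le hu.1
  refine (convex_Icc x y).image_sub_le_mul_sub_of_deriv_le (hdiff.continuousOn.mono hsub)
    (hdiff.mono (interior_subset.trans hsub)) (fun u hu ↦ ?_) x ⟨le_rfl, hxy⟩ y ⟨hxy, le_rfl⟩ hxy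
  have hu := interior_subset hu
  exact hderiv_two ▸ hmono (hsub hu) (mem_Ioi.2 two_pos) (hu.2.trans hy)

/-- Also at `x = 0`, where both sides vanish by the convention `Γ 0 = 0`. -/
lemma inv_Gamma_eq_div_Gamma_add_one (x : ℝ) : (Real.Gamma x)⁻¹ = x / Real.Gamma (x + 1) := by
  rcases eq_or_ne x 0 with rfl | hx
  · simp
  · rw [Real.Gamma_add_one hx, div_mul_cancel_left₀ hx]

lemma eulerMascheroniConstant_mul_sub_le_inv_Gamma_sub {x y : ℝ} (hx : 0 ≤ x) (hxy : x ≤ y)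
    (hy : y ≤ 1) : eulerMascheroniConstant * (y - x) ≤ (Real.Gamma y)⁻¹ - (Real.Gamma x)⁻¹ := by
  have hγ : 1 / 2 < eulerMascheroniConstant := Real.one_half_lt_eulerMascheroniConstant
  set A := Real.Gamma (x + 1)
  set B := Real.Gamma (y + 1)
  have hA0 : 0 < A := Real.Gamma_pos_of_pos (by linarith)
  have hB0 : 0 < B := Real.Gamma_pos_of_pos (by linarith)
  have hA1 : A ≤ 1 := Gamma_le_one_of_mem_Icc ⟨by linarith, by linarith⟩
  have hB1 : B ≤ 1 := Gamma_le_one_of_mem_Icc ⟨by linarith, by linarith⟩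
  have hBA : B - A ≤ (1 - eulerMascheroniConstant) * (y - x) := by
    simpa using Gamma_sub_Gamma_le (x := x + 1) (y := y + 1) (by linarith) (by linarith)
      (by linarith)
  have hA : 1 - A ≤ (1 - eulerMascheroniConstant) * (1 - x) := by
    have h := Gamma_sub_Gamma_le (x := x + 1) (y := 2) (by linarith) (by linarith) le_rfl
    rw [Real.Gamma_two] at h
    linarith
  have hnum : eulerMascheroniConstant * (y - x) ≤ y * A - x * B := by
    nlinarith [mul_nonneg (sub_nonneg.2 hxy) (sub_nonneg.2 hA), mul_nonneg hx (sub_nonneg.2 hBA)]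
  calc eulerMascheroniConstant * (y - x) ≤ y * A - x * B := hnum
    _ ≤ (y * A - x * B) / (A * B) := by
      have hnum0 : 0 ≤ y * A - x * B :=
        le_trans (mul_nonneg (by linarith) (sub_nonneg.2 hxy)) hnum
      exact le_div_self hnum0 (by positivity) (mul_le_one₀ hA1 hB0.le hB1)
    _ = (Real.Gamma y)⁻¹ - (Real.Gamma x)⁻¹ := by
      rw [inv_Gamma_eq_div_Gamma_add_one, inv_Gamma_eq_div_Gamma_add_one,
        div_sub_div _ _ hB0.ne' hA0.ne', mul_comm x B, mul_comm A B]

end Gamma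

section InverseLaplace

variable {a r : ℂ}

lemma norm_cpow_mul_exp_neg_mul {x : ℝ} (hx : 0 < x) (a r : ℂ) :
    ‖(x : ℂ) ^ a * exp (-(r * x))‖ = x ^ a.re * Real.exp (-r.re * x) := by
  simp [norm_cpow_eq_rpow_re_of_pos hx, norm_exp]

lemma aestronglyMeasurable_cpow_mul_exp_neg_mul (a r : ℂ) :
    AEStronglyMeasurable (fun x : ℝ ↦ (x : ℂ) ^ a * exp (-(r * x)))
      (volume.restrict (Ioi 0)) := by
  refine ContinuousOn.aestronglyMeasurable (fun x hx ↦ ?_) measurableSet_Ioi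
  exact ((continuousAt_ofReal_cpow_const x a (.inr (ne_of_gt hx))).mul
    (by fun_prop)).continuousWithinAt

lemma integrableOn_rpow_mul_exp_neg_mul {p b : ℝ} (hp : -1 < p) (hb : 0 < b) :
    IntegrableOn (fun x : ℝ ↦ x ^ p * Real.exp (-b * x)) (Ioi 0) := by
  simpa using integrableOn_rpow_mul_exp_neg_mul_rpow (p := 1) hp one_pos hb

lemma integrableOn_cpow_mul_exp_neg_mul (ha : -1 < a.re) (hr : 0 < r.re) :
    IntegrableOn (fun x : ℝ ↦ (x : ℂ) ^ a * exp (-(r * x))) (Ioi 0) := by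
  refine (integrableOn_rpow_mul_exp_neg_mul ha hr).mono'
    (aestronglyMeasurable_cpow_mul_exp_neg_mul a r) ?_
  filter_upwards [ae_restrict_mem measurableSet_Ioi] with x hx
  exact (norm_cpow_mul_exp_neg_mul hx a r).le

lemma differentiableAt_integral_cpow_mul_exp_neg_mul (ha : -1 < a.re) (hr : 0 < r.re) :
    DifferentiableAt ℂ (fun p : ℂ ↦ ∫ x : ℝ in Ioi 0, (x : ℂ) ^ a * exp (-(p * x))) r := by
  have hnhds : {p : ℂ | r.re / 2 < p.re} ∈ 𝓝 r :=
    (isOpen_lt continuous_const continuous_re).mem_nhds (half_lt_self hr)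
  have hderiv : ∀ x ∈ Ioi (0 : ℝ), ∀ p : ℂ,
      HasDerivAt (fun p : ℂ ↦ (x : ℂ) ^ a * exp (-(p * x)))
        (-((x : ℂ) ^ (a + 1) * exp (-(p * x)))) p := by
    intro x hx p
    refine ((((hasDerivAt_id p).mul_const (x : ℂ)).neg.cexp).const_mul _).congr_deriv ?_
    rw [cpow_add _ _ (ofReal_ne_zero.2 (ne_of_gt hx)), cpow_one]
    simp only [id, Pi.neg_apply]
    ring
  refine (hasDerivAt_integral_of_dominated_loc_of_deriv_le (μ := volume.restrict (Ioi 0))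
    (F' := fun p x ↦ -((x : ℂ) ^ (a + 1) * exp (-(p * x))))
    (bound := fun x ↦ x ^ (a + 1).re * Real.exp (-(r.re / 2) * x)) hnhds
    (.of_forall fun p ↦ aestronglyMeasurable_cpow_mul_exp_neg_mul a p)
    (integrableOn_cpow_mul_exp_neg_mul ha hr)
    (aestronglyMeasurable_cpow_mul_exp_neg_mul (a + 1) r).neg ?_
    (integrableOn_rpow_mul_exp_neg_mul (by simp; linarith) (half_pos hr)) ?_).2.differentiableAt
  · filter_upwards [ae_restrict_mem measurableSet_Ioi] with x (hx : 0 < x) p (hp : r.re / 2 < p.re)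
    rw [norm_neg, norm_cpow_mul_exp_neg_mul hx]
    gcongr
  · filter_upwards [ae_restrict_mem measurableSet_Ioi] with x hx p _
    exact hderiv x hx p

/-- Identity theorem: both sides are holomorphic in `r`, and they agree for `r` real. -/
lemma integral_cpow_mul_exp_neg_mul_Ioi_of_re_pos (ha : 0 < a.re) (hr : 0 < r.re) :
    ∫ x : ℝ in Ioi 0, (x : ℂ) ^ (a - 1) * exp (-(r * x)) = r ^ (-a) * Gamma a := by
  have hopen : IsOpen {p : ℂ | 0 < p.re} := isOpen_lt continuous_const continuous_re
  have hlhs : DifferentiableOn ℂ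
      (fun p : ℂ ↦ ∫ x : ℝ in Ioi 0, (x : ℂ) ^ (a - 1) * exp (-(p * x))) {p | 0 < p.re} :=
    fun p hp ↦ (differentiableAt_integral_cpow_mul_exp_neg_mul (by simpa using ha)
      hp).differentiableWithinAt
  have hrhs : DifferentiableOn ℂ (fun p : ℂ ↦ p ^ (-a) * Gamma a) {p | 0 < p.re} :=
    fun p hp ↦ ((differentiableAt_id.cpow_const (.inl hp)).mul_const _).differentiableWithinAt
  refine (hlhs.analyticOnNhd hopen).eqOn_of_preconnected_of_frequently_eq
    (hrhs.analyticOnNhd hopen) (convex_halfSpace_re_gt 0).isPreconnected (z₀ := 1) (by simp) ?_ hr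
  have hreal : ∀ᶠ x : ℝ in 𝓝[≠] 1,
      ∫ t : ℝ in Ioi 0, (t : ℂ) ^ (a - 1) * exp (-((x : ℂ) * t)) = (x : ℂ) ^ (-a) * Gamma a := by
    filter_upwards [nhdsWithin_le_nhds (Ioi_mem_nhds one_pos)] with x (hx : 0 < x)
    rw [integral_cpow_mul_exp_neg_mul_Ioi ha hx, one_div, inv_cpow _ _ (by
      simp [arg_ofReal_of_nonneg hx.le, Real.pi_ne_zero.symm]), cpow_neg]
  have htendsto : Tendsto ((↑) : ℝ → ℂ) (𝓝[≠] 1) (𝓝[≠] 1) := by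
    simpa using continuous_ofReal.continuousAt.continuousWithinAt.tendsto_nhdsWithin
      (s := {(1 : ℝ)}ᶜ) (t := {(1 : ℂ)}ᶜ) (x := 1) (fun x hx ↦ by simpa using hx)
  exact htendsto.frequently hreal.frequently

lemma fourier_indicator_cpow_mul_exp_neg_mul (ha : 0 < a.re) (hr : 0 < r.re) (v : ℝ) :
    𝓕 ((Ioi 0).indicator fun x : ℝ ↦ (x : ℂ) ^ (a - 1) * exp (-(r * x))) v =
      (r + 2 * π * v * I) ^ (-a) * Gamma a := by
  rw [Real.fourier_real_eq_integral_exp_smul,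
    ← integral_cpow_mul_exp_neg_mul_Ioi_of_re_pos ha (by simpa using hr),
    ← integral_indicator measurableSet_Ioi]
  congr 1 with x
  by_cases hx : x ∈ Ioi (0 : ℝ)
  · rw [indicator_of_mem hx, indicator_of_mem hx, smul_eq_mul, mul_left_comm, ← exp_add]
    push_cast
    ring_nf
  · rw [indicator_of_notMem hx, indicator_of_notMem hx, smul_zero]

lemma integrable_add_mul_I_cpow_neg {c w : ℝ} (hc : 0 < c) (hw : 1 < w) :
    Integrable fun y : ℝ ↦ (c + y * I : ℂ) ^ (-w : ℂ) := by
  have hmaj : Integrable fun y : ℝ ↦ c ^ (-w) * (1 + ‖y / c‖ ^ 2) ^ (-w / 2) :=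
    ((integrable_rpow_neg_one_add_norm_sq (E := ℝ) (μ := volume)
      (by simpa using hw)).comp_div hc.ne').const_mul _
  have hcont : Continuous fun y : ℝ ↦ (c + y * I : ℂ) ^ (-w : ℂ) :=
    Continuous.cpow (by fun_prop) continuous_const fun y ↦ .inl (by simpa using hc)
  refine hmaj.mono' hcont.aestronglyMeasurable (.of_forall fun y ↦ le_of_eq ?_)
  have hnorm : ‖(c + y * I : ℂ)‖ = c * (1 + ‖y / c‖ ^ 2) ^ (1 / 2 : ℝ) := by
    rw [norm_add_mul_I, ← Real.sqrt_eq_rpow, ← Real.sqrt_sq hc.le,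
      ← Real.sqrt_mul (by positivity), Real.sqrt_sq hc.le, norm_div, div_pow]
    simp only [Real.norm_eq_abs, sq_abs]
    congr 1
    field_simp
  rw [← ofReal_neg, norm_cpow_real, hnorm, Real.mul_rpow hc.le (by positivity),
    ← Real.rpow_mul (by positivity)]
  ring_nf

lemma fourierInv_add_mul_I_cpow_neg_mul_Gamma {c w : ℝ} (hc : 0 < c) (hw : 1 < w) :
    𝓕⁻ (fun v : ℝ ↦ (c + (2 * π * v : ℝ) * I) ^ (-w : ℂ) * Gamma w) 1 = exp (-c) := by
  have hc0 : 0 < (c : ℂ).re := hc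
  have hw0 : 0 < (w : ℂ).re := zero_lt_one.trans hw
  set f : ℝ → ℂ := (Ioi 0).indicator fun x ↦ (x : ℂ) ^ (w - 1 : ℂ) * exp (-(c * x))
  have hfourier : 𝓕 f = fun v : ℝ ↦ (c + (2 * π * v : ℝ) * I) ^ (-w : ℂ) * Gamma w := by
    ext v
    rw [fourier_indicator_cpow_mul_exp_neg_mul hw0 hc0]
    push_cast
    rfl
  have hf : Integrable f := by
    refine (integrableOn_cpow_mul_exp_neg_mul ?_ hc0).integrable_indicator measurableSet_Ioi
    simpa using hw0
  have hf' : Integrable (𝓕 f) := hfourier ▸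
    ((integrable_add_mul_I_cpow_neg hc hw).comp_mul_left' Real.two_pi_pos.ne').mul_const _
  have hf1 : f =ᶠ[𝓝 1] fun x ↦ (x : ℂ) ^ (w - 1 : ℂ) * exp (-(c * x)) :=
    eqOn_indicator.eventuallyEq_of_mem (Ioi_mem_nhds one_pos)
  have hcont : ContinuousAt f 1 :=
    ((continuousAt_ofReal_cpow_const 1 _ (.inr one_ne_zero)).mul (by fun_prop)).congr hf1.symm
  rw [← hfourier, hf.fourierInv_fourier_eq hf' hcont, hf1.eq_of_nhds]
  simp

lemma integral_exp_mul_cpow_neg {c w : ℝ} (hc : 0 < c) (hw : 1 < w) :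
    ∫ y : ℝ, exp (c + y * I) * (c + y * I) ^ (-w : ℂ) = 2 * π * (Gamma w)⁻¹ := by
  have hΓ : Gamma w ≠ 0 := Gamma_ne_zero_of_re_pos (zero_lt_one.trans hw)
  have hsubst := Measure.integral_comp_mul_left
    (fun y : ℝ ↦ exp (c + y * I) * (c + y * I) ^ (-w : ℂ)) (2 * π)
  have hfourierInv :
      ∫ v : ℝ, exp (c + (2 * π * v : ℝ) * I) * (c + (2 * π * v : ℝ) * I) ^ (-w : ℂ) =
        exp c * (Gamma w)⁻¹ * exp (-c) := by
    rw [← fourierInv_add_mul_I_cpow_neg_mul_Gamma hc hw, Real.fourierInv_eq',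
      ← integral_const_mul]
    congr 1 with v
    simp only [RCLike.inner_apply, conj_trivial, one_mul, smul_eq_mul, exp_add]
    field_simp
  rw [hfourierInv, mul_right_comm, ← exp_add, add_neg_cancel, exp_zero, one_mul,
    abs_of_pos (by positivity), real_smul] at hsubst
  rw [hsubst, ofReal_inv, ofReal_mul, ofReal_ofNat,
    mul_inv_cancel_left₀ (by simp [Real.pi_ne_zero])]

end InverseLaplace

section Sector

/-- The open sector `Re s > -a‖s‖` about the positive real axis. It omits the origin, and for
`a > 0` it contains the rest of the closed right half-plane. -/
def sector (a : ℝ) : Set ℂ := {s | -a * ‖s‖ < s.re}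

variable {a : ℝ} {s w : ℂ}

lemma isOpen_sector (a : ℝ) : IsOpen (sector a) :=
  isOpen_lt (by fun_prop) continuous_re

lemma ne_zero_of_mem_sector (hs : s ∈ sector a) : s ≠ 0 := by
  rintro rfl
  simp [sector] at hs

lemma sector_subset_slitPlane (ha : a ≤ 1) : sector a ⊆ slitPlane := by
  intro s (hs : -a * ‖s‖ < s.re)
  by_contra hslit
  obtain ⟨hre, him⟩ : s.re ≤ 0 ∧ s.im = 0 := by simpa [mem_slitPlane_iff] using hslit
  have hnorm : -s.re = ‖s‖ := by rw [← abs_re_eq_norm.2 him, abs_of_nonpos hre]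
  nlinarith [norm_nonneg s]

lemma ofReal_mul_mem_sector {x : ℝ} (hx : 0 < x) (hs : s ∈ sector a) : x * s ∈ sector a := by
  have hs : -a * ‖s‖ < s.re := hs
  change -a * ‖x * s‖ < (x * s).re
  rw [norm_mul, norm_real, Real.norm_of_nonneg hx.le, re_ofReal_mul]
  nlinarith

lemma cos_le_cos_mul {ρ θ : ℝ} (hρ : 0 ≤ ρ) (hρ1 : ρ ≤ 1) (hθ : |θ| ≤ π) :
    Real.cos θ ≤ Real.cos (θ * ρ) := by
  rw [← Real.cos_abs θ, ← Real.cos_abs (θ * ρ), abs_mul, abs_of_nonneg hρ]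
  exact Real.cos_le_cos_of_nonneg_of_le_pi (by positivity) hθ
    (mul_le_of_le_one_right (abs_nonneg θ) hρ1)

lemma cpow_mem_sector {ρ : ℝ} (hρ : 0 ≤ ρ) (hρ1 : ρ ≤ 1) (hs : s ∈ sector a) :
    s ^ (ρ : ℂ) ∈ sector a := by
  have hs0 : s ≠ 0 := ne_zero_of_mem_sector hs
  have hn : 0 < ‖s‖ := norm_pos_iff.2 hs0
  have hcos : -a < Real.cos s.arg := by
    rwa [cos_arg hs0, lt_div_iff₀ hn]
  change -a * ‖s ^ (ρ : ℂ)‖ < (s ^ (ρ : ℂ)).re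
  rw [norm_cpow_real, cpow_ofReal_re, mul_comm]
  exact mul_lt_mul_of_pos_left (hcos.trans_le (cos_le_cos_mul hρ hρ1 (abs_arg_le_pi s)))
    (by positivity)

lemma neg_re_sub_mul_norm_le_mul_norm_sub (ha : 0 ≤ a) (hw : w ∈ sector a) (l : ℂ) :
    -l.re - a * ‖l‖ ≤ (1 + a) * ‖w - l‖ := by
  have hre : w.re - l.re ≤ ‖w - l‖ := re_le_norm (w - l)
  have hnorm : ‖w‖ ≤ ‖w - l‖ + ‖l‖ := norm_le_norm_sub_add w l
  have hw : -a * ‖w‖ < w.re := hw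
  nlinarith

lemma mem_sector_of_re_pos (ha : 0 ≤ a) (hs : 0 < s.re) : s ∈ sector a :=
  (mul_nonpos_of_nonpos_of_nonneg (neg_nonpos.2 ha) (norm_nonneg s)).trans_lt hs

lemma half_norm_le_norm_of_mem_closedBall (ha1 : a ≤ 1)
    (hw : w ∈ Metric.closedBall s (a / 2 * ‖s‖)) :
    ‖s‖ / 2 ≤ ‖w‖ := by
  have hdist : ‖s - w‖ ≤ a / 2 * ‖s‖ := by rwa [← dist_eq_norm, dist_comm]
  nlinarith [norm_le_norm_sub_add s w, norm_nonneg s]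

lemma norm_le_three_halves_mul_norm_of_mem_closedBall (ha1 : a ≤ 1)
    (hw : w ∈ Metric.closedBall s (a / 2 * ‖s‖)) :
    ‖w‖ ≤ 3 / 2 * ‖s‖ := by
  have hdist : ‖w - s‖ ≤ a / 2 * ‖s‖ := by rwa [← dist_eq_norm]
  nlinarith [norm_le_norm_sub_add w s, norm_nonneg s]

lemma closedBall_subset_sector (ha0 : 0 < a) (ha1 : a ≤ 1) (hs : 0 < s.re) :
    Metric.closedBall s (a / 2 * ‖s‖) ⊆ sector a := by
  intro w hw
  have hhalf := half_norm_le_norm_of_mem_closedBall ha1 hw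
  have hdist : ‖s - w‖ ≤ a / 2 * ‖s‖ := by rwa [← dist_eq_norm, dist_comm]
  have hre : s.re - w.re ≤ ‖s - w‖ := re_le_norm (s - w)
  change -a * ‖w‖ < w.re
  nlinarith

end Sector

section VerticalLine

lemma tendsto_intervalIntegral_horizontal {G : ℂ → ℂ} {c₁ c₂ K : ℝ} {l : Filter ℝ} {T : ℝ → ℝ}
    (hbound : ∀ s : ℂ, s.re ∈ Icc c₁ c₂ → ‖G s‖ ≤ K * (1 + s.im ^ 2)⁻¹) (hc : c₁ ≤ c₂)
    (hT : Tendsto (fun y ↦ T y ^ 2) l atTop) :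
    Tendsto (fun y ↦ ∫ x in c₁..c₂, G (x + T y * I)) l (𝓝 0) := by
  have hlim : Tendsto (fun y ↦ K * (1 + T y ^ 2)⁻¹ * |c₂ - c₁|) l (𝓝 0) := by
    simpa using ((tendsto_inv_atTop_zero.comp (tendsto_atTop_add_const_left l 1 hT)).const_mul
      K).mul_const |c₂ - c₁|
  refine squeeze_zero_norm (fun y ↦ ?_) hlim
  refine intervalIntegral.norm_integral_le_of_norm_le_const fun x hx ↦ ?_
  rw [uIoc_of_le hc] at hx
  simpa using hbound (x + T y * I) (by simpa using Ioc_subset_Icc_self hx)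

lemma integrable_vertical {G : ℂ → ℂ} {c K : ℝ} (hG : ContinuousOn G {s | s.re = c})
    (hbound : ∀ s : ℂ, s.re = c → ‖G s‖ ≤ K * (1 + s.im ^ 2)⁻¹) :
    Integrable fun y : ℝ ↦ G (c + y * I) := by
  have hcont : Continuous fun y : ℝ ↦ G (c + y * I) :=
    hG.comp_continuous (by fun_prop) fun y ↦ by simp
  exact (integrable_inv_one_add_sq.const_mul K).mono' hcont.aestronglyMeasurable
    (.of_forall fun y ↦ by simpa using hbound (c + y * I) (by simp))

lemma integral_vertical_eq {G : ℂ → ℂ} {c₁ c₂ K : ℝ} (hc : c₁ ≤ c₂)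
    (hG : DifferentiableOn ℂ G {s | s.re ∈ Icc c₁ c₂})
    (hbound : ∀ s : ℂ, s.re ∈ Icc c₁ c₂ → ‖G s‖ ≤ K * (1 + s.im ^ 2)⁻¹) :
    ∫ y : ℝ, G (c₁ + y * I) = ∫ y : ℝ, G (c₂ + y * I) := by
  have hvert : ∀ c ∈ Icc c₁ c₂, Tendsto (fun T : ℝ ↦ ∫ y in -T..T, G (c + y * I)) atTop
      (𝓝 (∫ y : ℝ, G (c + y * I))) := by
    intro c hc'
    refine intervalIntegral_tendsto_integral (integrable_vertical (hG.continuousOn.mono ?_)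
      fun s hs ↦ hbound s (hs ▸ hc')) tendsto_neg_atTop_atBot tendsto_id
    rintro s rfl
    exact hc'
  have hrect : ∀ T : ℝ, (∫ y in -T..T, G (c₂ + y * I)) - ∫ y in -T..T, G (c₁ + y * I) =
      I * ((∫ x in c₁..c₂, G (x + (-T : ℝ) * I)) - ∫ x in c₁..c₂, G (x + T * I)) := by
    intro T
    have h := integral_boundary_rect_eq_zero_of_differentiableOn G (c₁ + (-T : ℝ) * I)
      (c₂ + T * I) (hG.mono fun s hs ↦ ?_)
    · simp only [smul_eq_mul, add_re, add_im, mul_re, mul_im, ofReal_re, ofReal_im, I_re, I_im,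
        mul_zero, mul_one, sub_zero, add_zero, zero_add] at h
      linear_combination (-I) * h +
        ((∫ y in -T..T, G (c₂ + y * I)) - ∫ y in -T..T, G (c₁ + y * I)) * I_sq
    · simpa [uIcc_of_le hc] using (mem_reProdIm.1 hs).1
  have hsq : Tendsto (fun T : ℝ ↦ T ^ 2) atTop atTop := tendsto_pow_atTop two_ne_zero
  have hlim := ((tendsto_intervalIntegral_horizontal (T := fun T ↦ -T) hbound hc
    (by simp [hsq])).sub
    (tendsto_intervalIntegral_horizontal (T := id) hbound hc hsq)).const_mul I
  have hdiff := (hvert c₂ ⟨hc, le_rfl⟩).sub (hvert c₁ ⟨le_rfl, hc⟩)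
  simp only [hrect] at hdiff
  have hzero := tendsto_nhds_unique hdiff hlim
  rw [sub_zero, mul_zero, sub_eq_zero] at hzero
  exact hzero.symm

end VerticalLine

section Bromwich

/-- The Bromwich integral `(2πi)⁻¹ ∫ e^s f(s) ds` over the line `Re s = c`, after four integrations
by parts. In this form it converges absolutely for every `f` of at most quadratic growth. -/
noncomputable def bromwich (c : ℝ) (f : ℂ → ℂ) : ℂ :=
  (2 * π)⁻¹ * ∫ y : ℝ, exp (c + y * I) * iteratedDeriv 4 f (c + y * I)

/-- `f` is holomorphic on `sector a`, and `‖f s‖ ≤ M * ‖s‖ ^ 2` there away from the disc of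
radius `r`: the class of functions whose Bromwich integral is controlled by `M`. -/
structure IsSymbol (a r M : ℝ) (f : ℂ → ℂ) : Prop where
  differentiableOn : DifferentiableOn ℂ f (sector a)
  norm_le : ∀ s ∈ sector a, r ≤ ‖s‖ → ‖f s‖ ≤ M * ‖s‖ ^ 2

variable {a c r M N : ℝ} {f g : ℂ → ℂ} {s : ℂ}

namespace IsSymbol

lemma const_mul (hf : IsSymbol a r M f) (k : ℂ) : IsSymbol a r (‖k‖ * M) fun s ↦ k * f s where
  differentiableOn := hf.differentiableOn.const_mul k
  norm_le s hs hr := by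
    rw [norm_mul, mul_assoc]
    exact mul_le_mul_of_nonneg_left (hf.norm_le s hs hr) (norm_nonneg k)

lemma nonneg (hf : IsSymbol a r M f) (ha : 0 ≤ a) : 0 ≤ M := by
  have hx : 0 < max r 1 := one_pos.trans_le (le_max_right r 1)
  have hnorm : ‖((max r 1 : ℝ) : ℂ)‖ = max r 1 := Complex.norm_of_nonneg hx.le
  have h := hf.norm_le (max r 1 : ℝ) (mem_sector_of_re_pos ha hx) (hnorm.symm ▸ le_max_left r 1)
  exact nonneg_of_mul_nonneg_left ((norm_nonneg _).trans h) (by rw [hnorm]; positivity)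

lemma norm_iteratedDeriv_le (hf : IsSymbol a r M f) (ha0 : 0 < a) (ha1 : a ≤ 1) (hs0 : 0 < s.re)
    (hs : 2 * r ≤ s.re) : ‖iteratedDeriv 4 f s‖ ≤ 864 * M / a ^ 4 / ‖s‖ ^ 2 := by
  have hsnorm : 0 < ‖s‖ := hs0.trans_le (re_le_norm s)
  have hM := hf.nonneg ha0.le
  have hsub := closedBall_subset_sector ha0 ha1 hs0
  have hbound : ∀ w ∈ Metric.sphere s (a / 2 * ‖s‖), ‖f w‖ ≤ M * (3 / 2 * ‖s‖) ^ 2 := by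
    intro w hw
    have hw := Metric.sphere_subset_closedBall hw
    have hw_ge := half_norm_le_norm_of_mem_closedBall ha1 hw
    have hw_le := norm_le_three_halves_mul_norm_of_mem_closedBall ha1 hw
    have hfw := hf.norm_le w (hsub hw) (by linarith [re_le_norm s])
    exact hfw.trans (by gcongr)
  calc ‖iteratedDeriv 4 f s‖
      ≤ (4).factorial * (M * (3 / 2 * ‖s‖) ^ 2) / (a / 2 * ‖s‖) ^ 4 :=
        norm_iteratedDeriv_le_of_forall_mem_sphere_norm_le 4 (by positivity)
          (hf.differentiableOn.diffContOnCl_ball hsub) hbound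
    _ = 864 * M / a ^ 4 / ‖s‖ ^ 2 := by
      norm_num [Nat.factorial]
      field_simp
      ring

lemma norm_exp_mul_iteratedDeriv_le (hf : IsSymbol a r M f) (ha0 : 0 < a) (ha1 : a ≤ 1)
    (hs1 : 1 ≤ s.re) (hs : 2 * r ≤ s.re) :
    ‖exp s * iteratedDeriv 4 f s‖ ≤
      864 * Real.exp s.re / a ^ 4 * M * (1 + s.im ^ 2)⁻¹ := by
  have hM := hf.nonneg ha0.le
  have hsq : 1 + s.im ^ 2 ≤ ‖s‖ ^ 2 := by
    rw [← normSq_eq_norm_sq, normSq_apply]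
    nlinarith
  calc ‖exp s * iteratedDeriv 4 f s‖ ≤ Real.exp s.re * (864 * M / a ^ 4 / ‖s‖ ^ 2) := by
        rw [norm_mul, norm_exp]
        gcongr
        exact hf.norm_iteratedDeriv_le ha0 ha1 (by linarith) hs
    _ ≤ Real.exp s.re * (864 * M / a ^ 4 / (1 + s.im ^ 2)) := by gcongr
    _ = 864 * Real.exp s.re / a ^ 4 * M * (1 + s.im ^ 2)⁻¹ := by ring

lemma contDiffAt (hf : IsSymbol a r M f) {n : WithTop ℕ∞} (hs : s ∈ sector a) :
    ContDiffAt ℂ n f s :=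
  (hf.differentiableOn.contDiffOn (isOpen_sector a)).contDiffAt ((isOpen_sector a).mem_nhds hs)

lemma differentiableOn_exp_mul_iteratedDeriv (hf : IsSymbol a r M f) :
    DifferentiableOn ℂ (fun s ↦ exp s * iteratedDeriv 4 f s) (sector a) := by
  have hanalytic := (hf.differentiableOn.analyticOnNhd (isOpen_sector a)).iterated_deriv 4
  rw [← iteratedDeriv_eq_iterate] at hanalytic
  exact differentiable_exp.differentiableOn.mul hanalytic.differentiableOn

lemma integrable_exp_mul_iteratedDeriv (hf : IsSymbol a r M f) (ha0 : 0 < a) (ha1 : a ≤ 1)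
    (hc : 1 ≤ c) (hr : 2 * r ≤ c) :
    Integrable fun y : ℝ ↦ exp (c + y * I) * iteratedDeriv 4 f (c + y * I) := by
  refine integrable_vertical (hf.differentiableOn_exp_mul_iteratedDeriv.continuousOn.mono ?_) ?_
    (G := fun s ↦ exp s * iteratedDeriv 4 f s) (K := 864 * Real.exp c / a ^ 4 * M)
  · exact fun s (hs : s.re = c) ↦ mem_sector_of_re_pos ha0.le (by linarith)
  · rintro s rfl
    exact hf.norm_exp_mul_iteratedDeriv_le ha0 ha1 hc hr

end IsSymbol

lemma norm_bromwich_le (hf : IsSymbol a r M f) (ha0 : 0 < a) (ha1 : a ≤ 1) (hc : 1 ≤ c)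
    (hr : 2 * r ≤ c) : ‖bromwich c f‖ ≤ 432 * Real.exp c / a ^ 4 * M := by
  have hint : ‖∫ y : ℝ, exp (c + y * I) * iteratedDeriv 4 f (c + y * I)‖ ≤
      ∫ y : ℝ, 864 * Real.exp c / a ^ 4 * M * (1 + y ^ 2)⁻¹ := by
    refine norm_integral_le_of_norm_le (integrable_inv_one_add_sq.const_mul _)
      (.of_forall fun y ↦ ?_)
    simpa using hf.norm_exp_mul_iteratedDeriv_le (s := c + y * I) ha0 ha1 (by simpa) (by simpa)
  rw [integral_const_mul, integral_univ_inv_one_add_sq] at hint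
  calc ‖bromwich c f‖ ≤ (2 * π)⁻¹ * (864 * Real.exp c / a ^ 4 * M * π) := by
        rw [bromwich, norm_mul, norm_real, Real.norm_of_nonneg (by positivity)]
        gcongr
    _ = 432 * Real.exp c / a ^ 4 * M := by
      field_simp
      ring

lemma bromwich_add (hf : IsSymbol a r M f) (hg : IsSymbol a r N g) (ha0 : 0 < a) (ha1 : a ≤ 1)
    (hc : 1 ≤ c) (hr : 2 * r ≤ c) :
    bromwich c (fun s ↦ f s + g s) = bromwich c f + bromwich c g := by
  simp only [bromwich]
  rw [← mul_add, ← integral_add (hf.integrable_exp_mul_iteratedDeriv ha0 ha1 hc hr)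
    (hg.integrable_exp_mul_iteratedDeriv ha0 ha1 hc hr)]
  congr 3 with y
  have hmem : (c + y * I : ℂ) ∈ sector a := mem_sector_of_re_pos ha0.le (by simp; linarith)
  rw [iteratedDeriv_fun_add (hf.contDiffAt hmem) (hg.contDiffAt hmem), mul_add]

lemma bromwich_const_mul (c : ℝ) (k : ℂ) (f : ℂ → ℂ) :
    bromwich c (fun s ↦ k * f s) = k * bromwich c f := by
  simp only [bromwich, iteratedDeriv_const_mul_field, mul_left_comm _ k, integral_const_mul]

lemma bromwich_sub (hf : IsSymbol a r M f) (hg : IsSymbol a r N g) (ha0 : 0 < a) (ha1 : a ≤ 1)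
    (hc : 1 ≤ c) (hr : 2 * r ≤ c) :
    bromwich c (fun s ↦ f s - g s) = bromwich c f - bromwich c g := by
  have hadd := bromwich_add hf (hg.const_mul (-1)) ha0 ha1 hc hr
  rw [bromwich_const_mul] at hadd
  simpa only [neg_one_mul, ← sub_eq_add_neg] using hadd

lemma bromwich_congr (hfg : EqOn f g (sector a)) (ha : 0 ≤ a) (hc : 0 < c) :
    bromwich c f = bromwich c g := by
  simp only [bromwich]
  congr 3 with y
  have hmem : (c + y * I : ℂ) ∈ sector a := mem_sector_of_re_pos ha (by simpa)
  rw [(hfg.eventuallyEq_of_mem ((isOpen_sector a).mem_nhds hmem)).iteratedDeriv_eq]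

lemma bromwich_eq_bromwich {c₁ c₂ : ℝ} (hf : IsSymbol a r M f) (ha0 : 0 < a) (ha1 : a ≤ 1)
    (hc₁ : 1 ≤ c₁) (hr : 2 * r ≤ c₁) (hc : c₁ ≤ c₂) : bromwich c₁ f = bromwich c₂ f := by
  have hM := hf.nonneg ha0.le
  refine congrArg _ (integral_vertical_eq (G := fun s ↦ exp s * iteratedDeriv 4 f s)
    (K := 864 * Real.exp c₂ / a ^ 4 * M) hc ?_ fun s hs ↦ ?_)
  · exact hf.differentiableOn_exp_mul_iteratedDeriv.mono fun s hs ↦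
      mem_sector_of_re_pos ha0.le (by linarith [hs.1])
  · refine (hf.norm_exp_mul_iteratedDeriv_le ha0 ha1 (by linarith [hs.1])
      (by linarith [hs.1])).trans ?_
    gcongr
    exact hs.2

lemma iteratedDeriv_cpow_const (n : ℕ) (a : ℂ) {s : ℂ} (hs : s ∈ slitPlane) :
    iteratedDeriv n (fun s ↦ s ^ a) s = (descPochhammer ℂ n).eval a * s ^ (a - n) := by
  induction n generalizing s with
  | zero => simp
  | succ n ih =>
    have heq : iteratedDeriv n (fun s ↦ s ^ a) =ᶠ[𝓝 s]
        fun s ↦ (descPochhammer ℂ n).eval a * s ^ (a - n) := by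
      filter_upwards [isOpen_slitPlane.mem_nhds hs] with w hw using ih hw
    have hderiv := ((hasDerivAt_id' s).cpow_const (c := a - n) hs).const_mul
      ((descPochhammer ℂ n).eval a)
    rw [iteratedDeriv_succ, heq.deriv_eq, hderiv.deriv, descPochhammer_succ_eval]
    push_cast
    simp only [sub_sub]
    ring

lemma inv_Gamma_eq_mul_inv_Gamma_add_four (w : ℂ) :
    (Gamma w)⁻¹ = w * (w + 1) * (w + 2) * (w + 3) * (Gamma (w + 4))⁻¹ := by
  rw [one_div_Gamma_eq_self_mul_one_div_Gamma_add_one w,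
    one_div_Gamma_eq_self_mul_one_div_Gamma_add_one (w + 1),
    one_div_Gamma_eq_self_mul_one_div_Gamma_add_one (w + 1 + 1),
    one_div_Gamma_eq_self_mul_one_div_Gamma_add_one (w + 1 + 1 + 1)]
  ring_nf

lemma bromwich_cpow_neg (hc : 0 < c) {w : ℝ} (hw : -3 < w) :
    bromwich c (fun s ↦ s ^ (-w : ℂ)) = (Gamma w)⁻¹ := by
  have hderiv (y : ℝ) : iteratedDeriv 4 (fun s : ℂ ↦ s ^ (-w : ℂ)) (c + y * I) =
      w * (w + 1) * (w + 2) * (w + 3) * (c + y * I) ^ (-(w + 4 : ℝ) : ℂ) := by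
    rw [iteratedDeriv_cpow_const 4 _ (.inl (by simpa))]
    simp only [descPochhammer_succ_eval, descPochhammer_zero, Polynomial.eval_one]
    push_cast
    ring_nf
  simp only [bromwich, hderiv, mul_left_comm (exp _), integral_const_mul]
  rw [integral_exp_mul_cpow_neg hc (by linarith), inv_Gamma_eq_mul_inv_Gamma_add_four w]
  push_cast
  field_simp

lemma isSymbol_cpow_neg (ha : a ≤ 1) (hr : 0 < r) {w : ℝ} (hw : -2 ≤ w) :
    IsSymbol a r (r ^ (-(w + 2))) fun s ↦ s ^ (-w : ℂ) where
  differentiableOn s hs :=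
    (differentiableAt_id.cpow_const (sector_subset_slitPlane ha hs)).differentiableWithinAt
  norm_le s _ hrs := by
    have hs0 : 0 < ‖s‖ := hr.trans_le hrs
    calc ‖s ^ (-w : ℂ)‖ = ‖s‖ ^ (-(w + 2)) * ‖s‖ ^ 2 := by
          rw [← ofReal_neg, norm_cpow_real, ← Real.rpow_natCast ‖s‖ 2, ← Real.rpow_add hs0]
          norm_num
      _ ≤ r ^ (-(w + 2)) * ‖s‖ ^ 2 := by
          gcongr ?_ * _
          exact Real.rpow_le_rpow_of_nonpos hr hrs (by linarith)

lemma isSymbol_of_hasSum {f : ℕ → ℂ → ℂ} {F : ℂ → ℂ} {M : ℕ → ℝ}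
    (hf : ∀ k, IsSymbol a r (M k) (f k)) (hM : Summable M) (hF : DifferentiableOn ℂ F (sector a))
    (hsum : ∀ s ∈ sector a, r ≤ ‖s‖ → HasSum (fun k ↦ f k s) (F s)) :
    IsSymbol a r (∑' k, M k) F where
  differentiableOn := hF
  norm_le s hs hrs := (hsum s hs hrs).norm_le_of_bounded (hM.hasSum.mul_right (‖s‖ ^ 2))
    fun k ↦ (hf k).norm_le s hs hrs

lemma hasSum_bromwich {f : ℕ → ℂ → ℂ} {F : ℂ → ℂ} {M : ℕ → ℝ}
    (hf : ∀ k, IsSymbol a r (M k) (f k)) (hM : Summable M) (hF : DifferentiableOn ℂ F (sector a))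
    (hsum : ∀ s ∈ sector a, r ≤ ‖s‖ → HasSum (fun k ↦ f k s) (F s))
    (ha0 : 0 < a) (ha1 : a ≤ 1) (hc : 1 ≤ c) (hr : 2 * r ≤ c) :
    HasSum (fun k ↦ bromwich c (f k)) (bromwich c F) := by
  let R (n : ℕ) (s : ℂ) : ℂ := F s - ∑ k ∈ Finset.range n, f k s
  have hR (n : ℕ) : IsSymbol a r (∑' k, M (k + n)) (R n) := by
    refine isSymbol_of_hasSum (fun k ↦ hf (k + n)) ((summable_nat_add_iff n).2 hM)
      (hF.sub (.fun_sum fun k _ ↦ (hf k).differentiableOn))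
      fun s hs hrs ↦ (hasSum_nat_add_iff' n).2 (hsum s hs hrs)
  have hsplit (n : ℕ) : ∑ k ∈ Finset.range n, bromwich c (f k) =
      bromwich c F - bromwich c (R n) := by
    induction n with
    | zero => simp [R]
    | succ n ih =>
      have hstep : R n = fun s ↦ f n s + R (n + 1) s := by
        ext s
        simp only [R, Finset.sum_range_succ]
        ring
      rw [Finset.sum_range_succ, ih, hstep, bromwich_add (hf n) (hR (n + 1)) ha0 ha1 hc hr]
      ring
  have hR0 : Tendsto (fun n ↦ bromwich c (R n)) atTop (𝓝 0) :=
    squeeze_zero_norm (fun n ↦ norm_bromwich_le (hR n) ha0 ha1 hc hr)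
      (by simpa using (tendsto_sum_nat_add M).const_mul (432 * Real.exp c / a ^ 4))
  have hsummable : Summable fun k ↦ ‖bromwich c (f k)‖ :=
    (hM.mul_left _).of_nonneg_of_le (fun k ↦ norm_nonneg _)
      fun k ↦ norm_bromwich_le (hf k) ha0 ha1 hc hr
  rw [hasSum_iff_tendsto_nat_of_summable_norm hsummable]
  simpa [hsplit] using hR0.const_sub (bromwich c F)

end Bromwich

section Representation

/-- The Laplace transform `s ^ (ρ - 1) / (s ^ ρ - z)` of `t ↦ E_ρ(z t ^ ρ)`. -/
noncomputable def mittagLefflerLaplace (ρ : ℝ) (z s : ℂ) : ℂ :=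
  s⁻¹ * (s ^ (ρ : ℂ) / (s ^ (ρ : ℂ) - z))

variable {a d ρ : ℝ} {z s : ℂ}

lemma isSymbol_mittagLefflerLaplace (ha : a ≤ 1) (hd : 0 < d)
    (hz : ∀ s ∈ sector a, d ≤ ‖s ^ (ρ : ℂ) - z‖) :
    IsSymbol a (1 / 2) (8 * (1 + ‖z‖ / d)) (mittagLefflerLaplace ρ z) where
  differentiableOn s hs := by
    have hcpow : DifferentiableAt ℂ (fun s : ℂ ↦ s ^ (ρ : ℂ)) s :=
      differentiableAt_id.cpow_const (sector_subset_slitPlane ha hs)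
    exact ((differentiableAt_inv (ne_zero_of_mem_sector hs)).mul (hcpow.div
      (hcpow.sub_const z) (norm_pos_iff.1 (hd.trans_le (hz s hs))))).differentiableWithinAt
  norm_le s hs hrs := by
    have hne : s ^ (ρ : ℂ) - z ≠ 0 := norm_pos_iff.1 (hd.trans_le (hz s hs))
    have hquot : ‖s ^ (ρ : ℂ) / (s ^ (ρ : ℂ) - z)‖ ≤ 1 + ‖z‖ / d := by
      have heq : s ^ (ρ : ℂ) / (s ^ (ρ : ℂ) - z) = 1 + z / (s ^ (ρ : ℂ) - z) := by
        field_simp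
        ring
      rw [heq]
      refine norm_add_le_of_le (by simp) ?_
      rw [norm_div]
      gcongr
      exact hz s hs
    have hinv : ‖s⁻¹‖ ≤ 8 * ‖s‖ ^ 2 := by
      rw [norm_inv, inv_le_iff_one_le_mul₀ (by linarith)]
      nlinarith [pow_le_pow_left₀ (by norm_num) hrs 3]
    calc ‖mittagLefflerLaplace ρ z s‖ ≤ 8 * ‖s‖ ^ 2 * (1 + ‖z‖ / d) := by
          rw [mittagLefflerLaplace, norm_mul]
          gcongr
      _ = 8 * (1 + ‖z‖ / d) * ‖s‖ ^ 2 := by ring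

lemma hasSum_mittagLefflerLaplace (hs : s ≠ 0) (hz : ‖z‖ < ‖s ^ (ρ : ℂ)‖) :
    HasSum (fun k : ℕ ↦ z ^ k * s ^ (-(ρ * k + 1 : ℝ) : ℂ)) (mittagLefflerLaplace ρ z s) := by
  have hpow : s ^ (ρ : ℂ) ≠ 0 := by simp [cpow_eq_zero_iff, hs]
  have hgeom := (hasSum_geometric_of_norm_lt_one (ξ := z / s ^ (ρ : ℂ)) (by
    rwa [norm_div, div_lt_one (norm_pos_iff.2 hpow)])).mul_left s⁻¹
  have hterm (k : ℕ) : z ^ k * s ^ (-(ρ * k + 1 : ℝ) : ℂ) = s⁻¹ * (z / s ^ (ρ : ℂ)) ^ k := by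
    push_cast
    rw [cpow_neg, cpow_add _ _ hs, cpow_one, cpow_mul_nat, div_pow, mul_inv]
    ring
  have hvalue : mittagLefflerLaplace ρ z s = s⁻¹ * (1 - z / s ^ (ρ : ℂ))⁻¹ := by
    rw [mittagLefflerLaplace, one_sub_div hpow, inv_div]
  simpa only [hterm, hvalue] using hgeom

lemma mittagLeffler_eq_bromwich (ha0 : 0 < a) (ha1 : a ≤ 1) (hρ : 0 < ρ) (hd : 0 < d)
    (hz : ∀ s ∈ sector a, d ≤ ‖s ^ (ρ : ℂ) - z‖) :
    mittagLeffler ρ z = bromwich 1 (mittagLefflerLaplace ρ z) := by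
  obtain ⟨r, hzr, hr⟩ : ∃ r : ℝ, ‖z‖ < r ^ ρ ∧ 1 ≤ r :=
    (((tendsto_rpow_atTop hρ).eventually_gt_atTop ‖z‖).and (eventually_ge_atTop 1)).exists
  have hr0 : 0 < r := one_pos.trans_le hr
  have hsymbol := isSymbol_mittagLefflerLaplace ha1 hd hz
  have hterm (k : ℕ) : IsSymbol a r (‖z ^ k‖ * r ^ (-(ρ * k + 1 + 2)))
      fun s ↦ z ^ k * s ^ (-(ρ * k + 1 : ℝ) : ℂ) :=
    (isSymbol_cpow_neg ha1 hr0 (by nlinarith [mul_nonneg hρ.le k.cast_nonneg])).const_mul _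
  have hsummable : Summable fun k : ℕ ↦ ‖z ^ k‖ * r ^ (-(ρ * k + 1 + 2)) := by
    have hgeom : Summable fun k : ℕ ↦ r ^ (-3 : ℝ) * (‖z‖ / r ^ ρ) ^ k :=
      (summable_geometric_of_lt_one (by positivity) ((div_lt_one (by positivity)).2 hzr)).mul_left _
    refine hgeom.congr fun k ↦ ?_
    rw [norm_pow, div_pow, ← Real.rpow_mul_natCast hr0.le, add_assoc, neg_add, Real.rpow_add hr0,
      Real.rpow_neg hr0.le (ρ * k)]
    norm_num
    ring
  have hsum := hasSum_bromwich hterm hsummable hsymbol.differentiableOn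
    (fun s hs hrs ↦ hasSum_mittagLefflerLaplace (ne_zero_of_mem_sector hs) (by
      rw [norm_cpow_real]
      exact hzr.trans_le (Real.rpow_le_rpow hr0.le hrs hρ.le)))
    ha0 ha1 (c := 2 * r) (by linarith) le_rfl
  rw [bromwich_eq_bromwich hsymbol ha0 ha1 le_rfl (by norm_num) (by linarith : 1 ≤ 2 * r),
    ← hsum.tsum_eq, mittagLeffler]
  refine tsum_congr fun k ↦ ?_
  rw [bromwich_const_mul, bromwich_cpow_neg (by linarith)
    (by nlinarith [mul_nonneg hρ.le k.cast_nonneg]), div_eq_mul_inv]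
  push_cast
  rfl

end Representation

section Remainder

/-- The part `s⁻¹ u ^ 2 / (u - l)`, `u = (s / t) ^ ρ`, of `l` times the Laplace transform of
`E_ρ(l t ^ ρ)` that remains after its leading term `-s⁻¹ u` is removed. Its Bromwich integral is
of order `t ^ (-2 * ρ)` for large `t`. -/
noncomputable def mittagLefflerRemainder (l : ℂ) (t ρ : ℝ) (s : ℂ) : ℂ :=
  s⁻¹ * (((s / t) ^ (ρ : ℂ)) ^ 2 / ((s / t) ^ (ρ : ℂ) - l))

variable {a d t ρ ρ₁ ρ₂ : ℝ} {l s : ℂ}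

lemma div_ofReal_cpow (ht : 0 < t) (hs : s ≠ 0) (ρ : ℝ) :
    (s / t) ^ (ρ : ℂ) = s ^ (ρ : ℂ) / (t ^ ρ : ℝ) := by
  have ht0 : (t : ℂ) ≠ 0 := ofReal_ne_zero.2 ht.ne'
  have hlog : log (s / t) = log s - log t := by
    rw [div_eq_mul_inv, ← ofReal_inv, log_mul_ofReal _ (inv_pos.2 ht) _ hs, Real.log_inv,
      ofReal_neg, ofReal_log ht.le, neg_add_eq_sub]
  rw [ofReal_cpow ht.le, cpow_def_of_ne_zero (div_ne_zero hs ht0), cpow_def_of_ne_zero hs,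
    cpow_def_of_ne_zero ht0, ← exp_sub, hlog, sub_mul]

lemma div_ofReal_mem_sector (ht : 0 < t) (hs : s ∈ sector a) : s / t ∈ sector a := by
  simpa [div_eq_inv_mul] using ofReal_mul_mem_sector (inv_pos.2 ht) hs

lemma le_norm_div_ofReal_cpow_sub (ht : 0 < t) (hρ0 : 0 ≤ ρ) (hρ1 : ρ ≤ 1)
    (hl : ∀ w ∈ sector a, d ≤ ‖w - l‖) (hs : s ∈ sector a) : d ≤ ‖(s / t) ^ (ρ : ℂ) - l‖ :=
  hl _ (cpow_mem_sector hρ0 hρ1 (div_ofReal_mem_sector ht hs))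

lemma norm_div_ofReal_cpow_le (ht : 0 < t) (hρ0 : 0 ≤ ρ) (hρ1 : ρ ≤ 1) (hs : 1 / 2 ≤ ‖s‖) :
    ‖(s / t) ^ (ρ : ℂ)‖ ≤ 2 * ‖s‖ * t ^ (-ρ) := by
  have hs0 : s ≠ 0 := norm_pos_iff.1 (by linarith)
  have hpow : ‖s‖ ^ ρ ≤ 2 * ‖s‖ :=
    calc ‖s‖ ^ ρ ≤ (2 * ‖s‖) ^ ρ := by gcongr; linarith
      _ ≤ (2 * ‖s‖) ^ (1 : ℝ) := Real.rpow_le_rpow_of_exponent_le (by linarith) hρ1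
      _ = 2 * ‖s‖ := Real.rpow_one _
  rw [div_ofReal_cpow ht hs0, norm_div, norm_cpow_real, norm_real,
    Real.norm_of_nonneg (by positivity), Real.rpow_neg ht.le, ← div_eq_mul_inv]
  gcongr

lemma mittagLefflerRemainder_eq (ht : 0 < t) (hs : s ≠ 0) (hne : (s / t) ^ (ρ : ℂ) ≠ l) :
    mittagLefflerRemainder l t ρ s = l * mittagLefflerLaplace ρ (l * (t ^ ρ : ℝ)) s +
      (t ^ (-ρ) : ℝ) * s ^ (-(1 - ρ : ℝ) : ℂ) := by
  have htρ : ((t ^ ρ : ℝ) : ℂ) ≠ 0 := ofReal_ne_zero.2 (by positivity)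
  have hpow : s ^ (-(1 - ρ : ℝ) : ℂ) = s⁻¹ * s ^ (ρ : ℂ) := by
    rw [← cpow_neg_one, ← cpow_add _ _ hs]
    push_cast
    ring_nf
  have hsub : s ^ (ρ : ℂ) - (t ^ ρ : ℝ) * l ≠ 0 := fun h ↦ hne (by
    rw [div_ofReal_cpow ht hs, div_eq_iff htρ, mul_comm]
    exact sub_eq_zero.1 h)
  rw [mittagLefflerRemainder, mittagLefflerLaplace, hpow, div_ofReal_cpow ht hs,
    Real.rpow_neg ht.le, ofReal_inv, div_sub' htρ, mul_comm _ l]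
  field_simp
  ring

lemma isSymbol_mittagLefflerRemainder (ha : a ≤ 1) (ht : 0 < t) (hρ0 : 0 ≤ ρ) (hρ1 : ρ ≤ 1)
    (hd : 0 < d) (hl : ∀ w ∈ sector a, d ≤ ‖w - l‖) :
    IsSymbol a (1 / 2) (8 * (t ^ (-ρ)) ^ 2 / d) (mittagLefflerRemainder l t ρ) where
  differentiableOn s hs := by
    have hcpow : DifferentiableAt ℂ (fun s : ℂ ↦ (s / t) ^ (ρ : ℂ)) s :=
      (differentiableAt_id.div_const _).cpow_const
        (sector_subset_slitPlane ha (div_ofReal_mem_sector ht hs))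
    have hsub := hd.trans_le (le_norm_div_ofReal_cpow_sub ht hρ0 hρ1 hl hs)
    exact ((differentiableAt_inv (ne_zero_of_mem_sector hs)).mul ((hcpow.pow 2).div
      (hcpow.sub_const l) (norm_pos_iff.1 hsub))).differentiableWithinAt
  norm_le s hs hrs := by
    have hinv : ‖s‖⁻¹ ≤ 2 := by
      rw [inv_le_comm₀ (by linarith) two_pos]
      linarith
    calc ‖mittagLefflerRemainder l t ρ s‖ ≤ 2 * ((2 * ‖s‖ * t ^ (-ρ)) ^ 2 / d) := by
          rw [mittagLefflerRemainder, norm_mul, norm_inv, norm_div, norm_pow]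
          gcongr
          · exact norm_div_ofReal_cpow_le ht hρ0 hρ1 hrs
          · exact le_norm_div_ofReal_cpow_sub ht hρ0 hρ1 hl hs
      _ = 8 * (t ^ (-ρ)) ^ 2 / d * ‖s‖ ^ 2 := by ring

lemma bromwich_mittagLefflerRemainder (ha0 : 0 < a) (ha1 : a ≤ 1) (ht : 0 < t) (hρ0 : 0 < ρ)
    (hρ1 : ρ ≤ 1) (hd : 0 < d) (hl : ∀ w ∈ sector a, d ≤ ‖w - l‖) :
    bromwich 1 (mittagLefflerRemainder l t ρ) = l * mittagLeffler ρ (l * (t ^ ρ : ℝ)) +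
      (t ^ (-ρ) * (Real.Gamma (1 - ρ))⁻¹ : ℝ) := by
  have hdist : ∀ s ∈ sector a, d * t ^ ρ ≤ ‖s ^ (ρ : ℂ) - l * (t ^ ρ : ℝ)‖ := by
    intro s hs
    have htρ : ((t ^ ρ : ℝ) : ℂ) ≠ 0 := ofReal_ne_zero.2 (by positivity)
    have hscale : s ^ (ρ : ℂ) - l * (t ^ ρ : ℝ) = ((s / t) ^ (ρ : ℂ) - l) * (t ^ ρ : ℝ) := by
      rw [div_ofReal_cpow ht (ne_zero_of_mem_sector hs), sub_mul, div_mul_cancel₀ _ htρ]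
    rw [hscale, norm_mul, norm_real, Real.norm_of_nonneg (by positivity)]
    gcongr
    exact le_norm_div_ofReal_cpow_sub ht hρ0.le hρ1 hl hs
  have hdecomp : EqOn (mittagLefflerRemainder l t ρ)
      (fun s ↦ l * mittagLefflerLaplace ρ (l * (t ^ ρ : ℝ)) s +
        (t ^ (-ρ) : ℝ) * s ^ (-(1 - ρ : ℝ) : ℂ)) (sector a) := fun s hs ↦
    mittagLefflerRemainder_eq ht (ne_zero_of_mem_sector hs) (sub_ne_zero.1
      (norm_pos_iff.1 (hd.trans_le (le_norm_div_ofReal_cpow_sub ht hρ0.le hρ1 hl hs))))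
  rw [bromwich_congr hdecomp ha0.le one_pos,
    bromwich_add ((isSymbol_mittagLefflerLaplace ha1 (by positivity) hdist).const_mul l)
      ((isSymbol_cpow_neg ha1 (by norm_num) (by linarith)).const_mul _) ha0 ha1 le_rfl
      (by norm_num),
    bromwich_const_mul, bromwich_const_mul, bromwich_cpow_neg one_pos (by linarith),
    mittagLeffler_eq_bromwich ha0 ha1 hρ0 (by positivity) hdist, Gamma_ofReal]
  push_cast
  rfl

lemma norm_log_div_ofReal_le (ht0 : 0 < t) (ht : 1 ≤ Real.log t) (hs : 1 / 2 ≤ ‖s‖) :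
    ‖log (s / t)‖ ≤ 12 * ‖s‖ * Real.log t := by
  have hs0 : 0 < ‖s‖ := by linarith
  have hre : |Real.log ‖s / t‖| ≤ 2 * ‖s‖ + Real.log t := by
    rw [norm_div, norm_real, Real.norm_of_nonneg ht0.le, Real.log_div hs0.ne' ht0.ne', abs_le]
    have hlower := Real.one_sub_inv_le_log_of_pos hs0
    have hinv : ‖s‖⁻¹ ≤ 2 := by
      rw [inv_le_comm₀ hs0 two_pos]
      linarith
    have hupper := Real.log_le_sub_one_of_pos hs0
    constructor <;> linarith
  calc ‖log (s / t)‖ ≤ |Real.log ‖s / t‖| + |(s / t).arg| := by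
        simpa only [log_re, log_im] using norm_le_abs_re_add_abs_im (log (s / t))
    _ ≤ 2 * ‖s‖ + Real.log t + 4 := by
        linarith [abs_arg_le_pi (s / t), Real.pi_le_four]
    _ ≤ 12 * ‖s‖ * Real.log t := by nlinarith

lemma hasDerivAt_mittagLefflerRemainder (hs : s / t ≠ 0) (hne : (s / t) ^ (ρ : ℂ) - l ≠ 0) :
    HasDerivAt (fun ρ ↦ mittagLefflerRemainder l t ρ s)
      (s⁻¹ * (log (s / t) * ((s / t) ^ (ρ : ℂ)) ^ 2 *
        (((s / t) ^ (ρ : ℂ) - 2 * l) / ((s / t) ^ (ρ : ℂ) - l) ^ 2))) ρ := by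
  have hcpow : HasDerivAt (fun ρ : ℝ ↦ (s / t) ^ (ρ : ℂ)) ((s / t) ^ (ρ : ℂ) * log (s / t)) ρ := by
    simpa using ((hasDerivAt_id (ρ : ℂ)).const_cpow (.inl hs)).comp_ofReal
  refine (((hcpow.fun_pow 2).fun_div (hcpow.sub_const l) hne).const_mul s⁻¹).congr_deriv ?_
  push_cast
  ring

lemma norm_sub_two_mul_div_sq_le {u : ℂ} (hd : 0 < d) (hu : d ≤ ‖u - l‖) :
    ‖(u - 2 * l) / (u - l) ^ 2‖ ≤ (1 + ‖l‖ / d) / d := by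
  have hne : u - l ≠ 0 := norm_pos_iff.1 (hd.trans_le hu)
  have heq : (u - 2 * l) / (u - l) ^ 2 = (1 - l / (u - l)) / (u - l) := by
    field_simp
    ring
  rw [heq, norm_div]
  gcongr
  refine norm_sub_le_of_le (by simp) ?_
  rw [norm_div]
  gcongr

lemma norm_deriv_mittagLefflerRemainder_le (ht0 : 0 < t) (ht : 1 ≤ Real.log t) (hρ0 : 0 ≤ ρ)
    (hρ1 : ρ ≤ 1) (hd : 0 < d) (hl : ∀ w ∈ sector a, d ≤ ‖w - l‖) (hs : s ∈ sector a)
    (hrs : 1 / 2 ≤ ‖s‖) :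
    ‖deriv (fun ρ ↦ mittagLefflerRemainder l t ρ s) ρ‖ ≤
      48 * ((1 + ‖l‖ / d) / d) * (t ^ (-ρ)) ^ 2 * Real.log t * ‖s‖ ^ 2 := by
  have hs0 : 0 < ‖s‖ := by linarith
  have hdist : d ≤ ‖(s / t) ^ (ρ : ℂ) - l‖ := le_norm_div_ofReal_cpow_sub ht0 hρ0 hρ1 hl hs
  rw [(hasDerivAt_mittagLefflerRemainder (ne_zero_of_mem_sector (div_ofReal_mem_sector ht0 hs))
    (norm_pos_iff.1 (hd.trans_le hdist))).deriv, norm_mul, norm_mul, norm_mul, norm_inv, norm_pow]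
  calc ‖s‖⁻¹ * (‖log (s / t)‖ * ‖(s / t) ^ (ρ : ℂ)‖ ^ 2 *
        ‖((s / t) ^ (ρ : ℂ) - 2 * l) / ((s / t) ^ (ρ : ℂ) - l) ^ 2‖)
      ≤ ‖s‖⁻¹ * (12 * ‖s‖ * Real.log t * (2 * ‖s‖ * t ^ (-ρ)) ^ 2 * ((1 + ‖l‖ / d) / d)) := by
        gcongr
        · exact norm_log_div_ofReal_le ht0 ht hrs
        · exact norm_div_ofReal_cpow_le ht0 hρ0 hρ1 hrs
        · exact norm_sub_two_mul_div_sq_le hd hdist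
    _ = 48 * ((1 + ‖l‖ / d) / d) * (t ^ (-ρ)) ^ 2 * Real.log t * ‖s‖ ^ 2 := by
        field_simp
        ring

lemma norm_mittagLefflerRemainder_sub_le (ht1 : 1 ≤ t) (ht : 1 ≤ Real.log t) (hρ₁ : 0 ≤ ρ₁)
    (hρ : ρ₁ ≤ ρ₂) (hρ₂ : ρ₂ ≤ 1) (hd : 0 < d) (hl : ∀ w ∈ sector a, d ≤ ‖w - l‖)
    (hs : s ∈ sector a) (hrs : 1 / 2 ≤ ‖s‖) :
    ‖mittagLefflerRemainder l t ρ₂ s - mittagLefflerRemainder l t ρ₁ s‖ ≤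
      48 * ((1 + ‖l‖ / d) / d) * (t ^ (-ρ₁)) ^ 2 * Real.log t * (ρ₂ - ρ₁) * ‖s‖ ^ 2 := by
  have ht0 : 0 < t := one_pos.trans_le ht1
  have hdiff : ∀ ρ ∈ Icc ρ₁ ρ₂,
      DifferentiableAt ℝ (fun ρ ↦ mittagLefflerRemainder l t ρ s) ρ := fun ρ hρ ↦
    (hasDerivAt_mittagLefflerRemainder (ne_zero_of_mem_sector (div_ofReal_mem_sector ht0 hs))
      (norm_pos_iff.1 (hd.trans_le (le_norm_div_ofReal_cpow_sub ht0 (hρ₁.trans hρ.1)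
        (hρ.2.trans hρ₂) hl hs)))).differentiableAt
  have hbound : ∀ ρ ∈ Icc ρ₁ ρ₂, ‖deriv (fun ρ ↦ mittagLefflerRemainder l t ρ s) ρ‖ ≤
      48 * ((1 + ‖l‖ / d) / d) * (t ^ (-ρ₁)) ^ 2 * Real.log t * ‖s‖ ^ 2 := by
    intro ρ hρ
    refine (norm_deriv_mittagLefflerRemainder_le ht0 ht (hρ₁.trans hρ.1) (hρ.2.trans hρ₂) hd hl
      hs hrs).trans ?_
    gcongr
    exact hρ.1
  have hmvt := (convex_Icc ρ₁ ρ₂).norm_image_sub_le_of_norm_deriv_le hdiff hbound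
    (left_mem_Icc.2 hρ) (right_mem_Icc.2 hρ)
  rw [Real.norm_of_nonneg (sub_nonneg.2 hρ)] at hmvt
  exact hmvt.trans_eq (by ring)

lemma norm_bromwich_mittagLefflerRemainder_sub_le (ha0 : 0 < a) (ha1 : a ≤ 1) (ht1 : 1 ≤ t)
    (ht : 1 ≤ Real.log t) (hρ₁ : 0 ≤ ρ₁) (hρ : ρ₁ ≤ ρ₂) (hρ₂ : ρ₂ ≤ 1) (hd : 0 < d)
    (hl : ∀ w ∈ sector a, d ≤ ‖w - l‖) :
    ‖bromwich 1 (mittagLefflerRemainder l t ρ₂) - bromwich 1 (mittagLefflerRemainder l t ρ₁)‖ ≤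
      432 * Real.exp 1 / a ^ 4 *
        (48 * ((1 + ‖l‖ / d) / d) * (t ^ (-ρ₁)) ^ 2 * Real.log t * (ρ₂ - ρ₁)) := by
  have ht0 : 0 < t := one_pos.trans_le ht1
  have hsymbol₁ := isSymbol_mittagLefflerRemainder ha1 ht0 hρ₁ (hρ.trans hρ₂) hd hl
  have hsymbol₂ := isSymbol_mittagLefflerRemainder ha1 ht0 (hρ₁.trans hρ) hρ₂ hd hl
  have hdiff : IsSymbol a (1 / 2)
      (48 * ((1 + ‖l‖ / d) / d) * (t ^ (-ρ₁)) ^ 2 * Real.log t * (ρ₂ - ρ₁))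
      fun s ↦ mittagLefflerRemainder l t ρ₂ s - mittagLefflerRemainder l t ρ₁ s :=
    { differentiableOn := hsymbol₂.differentiableOn.sub hsymbol₁.differentiableOn
      norm_le := fun s hs hrs ↦
        norm_mittagLefflerRemainder_sub_le ht1 ht hρ₁ hρ hρ₂ hd hl hs hrs }
  rw [← bromwich_sub hsymbol₂ hsymbol₁ ha0 ha1 le_rfl (by norm_num)]
  exact norm_bromwich_le hdiff ha0 ha1 le_rfl (by norm_num)

end Remainder

section Injectivity

variable {a d t ρ₁ ρ₂ β : ℝ} {l : ℂ}

lemma eulerMascheroniConstant_mul_rpow_neg_mul_sub_le (ht : 1 ≤ t) (hρ₁ : 0 ≤ ρ₁) (hρ : ρ₁ ≤ ρ₂)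
    (hρ₂ : ρ₂ ≤ 1) :
    Real.eulerMascheroniConstant * t ^ (-ρ₁) * (ρ₂ - ρ₁) ≤
      t ^ (-ρ₁) * (Real.Gamma (1 - ρ₁))⁻¹ - t ^ (-ρ₂) * (Real.Gamma (1 - ρ₂))⁻¹ := by
  have ht0 : 0 < t := one_pos.trans_le ht
  have hGamma := eulerMascheroniConstant_mul_sub_le_inv_Gamma_sub (x := 1 - ρ₂) (y := 1 - ρ₁)
    (by linarith) (by linarith) (by linarith)
  have hnonneg : 0 ≤ (Real.Gamma (1 - ρ₂))⁻¹ :=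
    inv_nonneg.2 (Real.Gamma_nonneg_of_nonneg (by linarith))
  have hpow : t ^ (-ρ₂) ≤ t ^ (-ρ₁) := Real.rpow_le_rpow_of_exponent_le ht (by linarith)
  calc Real.eulerMascheroniConstant * t ^ (-ρ₁) * (ρ₂ - ρ₁)
      = t ^ (-ρ₁) * (Real.eulerMascheroniConstant * (1 - ρ₁ - (1 - ρ₂))) := by ring
    _ ≤ t ^ (-ρ₁) * ((Real.Gamma (1 - ρ₁))⁻¹ - (Real.Gamma (1 - ρ₂))⁻¹) :=
      mul_le_mul_of_nonneg_left hGamma (Real.rpow_pos_of_pos ht0 _).le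
    _ ≤ t ^ (-ρ₁) * (Real.Gamma (1 - ρ₁))⁻¹ - t ^ (-ρ₂) * (Real.Gamma (1 - ρ₂))⁻¹ := by
      rw [mul_sub]
      exact sub_le_sub_left (mul_le_mul_of_nonneg_right hpow hnonneg) _

lemma exists_sector_forall_le_norm_sub (hl : l.re < 0) :
    ∃ a d : ℝ, 0 < a ∧ a ≤ 1 ∧ 0 < d ∧ ∀ w ∈ sector a, d ≤ ‖w - l‖ := by
  have hnorm : -l.re ≤ ‖l‖ := by simpa using re_le_norm (-l)
  have hnorm0 : 0 < ‖l‖ := by linarith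
  have ha0 : 0 < -l.re / (2 * ‖l‖) := div_pos (by linarith) (by positivity)
  have ha1 : -l.re / (2 * ‖l‖) ≤ 1 := by
    rw [div_le_one (by positivity)]
    linarith
  refine ⟨-l.re / (2 * ‖l‖), -l.re / 4, ha0, ha1, by linarith, fun w hw ↦ ?_⟩
  have hdist := neg_re_sub_mul_norm_le_mul_norm_sub ha0.le hw l
  have hmul : -l.re / (2 * ‖l‖) * ‖l‖ = -l.re / 2 := by field_simp
  nlinarith [norm_nonneg (w - l)]

lemma eventually_mul_log_lt_rpow (hβ : 0 < β) (K : ℝ) :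
    ∀ᶠ t : ℝ in atTop, K * Real.log t < t ^ β := by
  have hlittle := ((isLittleO_log_rpow_atTop hβ).const_mul_left K).def one_half_pos
  filter_upwards [hlittle, eventually_gt_atTop 0] with t ht ht0
  rw [Real.norm_eq_abs, Real.norm_of_nonneg (by positivity)] at ht
  linarith [le_abs_self (K * Real.log t), Real.rpow_pos_of_pos ht0 β]

lemma eulerMascheroniConstant_mul_rpow_le_of_mittagLeffler_eq (ha0 : 0 < a) (ha1 : a ≤ 1)
    (ht1 : 1 ≤ t) (ht : 1 ≤ Real.log t) (hρ₁ : 0 < ρ₁) (hρ : ρ₁ < ρ₂) (hρ₂ : ρ₂ ≤ 1) (hd : 0 < d)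
    (hl : ∀ w ∈ sector a, d ≤ ‖w - l‖)
    (heq : mittagLeffler ρ₁ (l * (t ^ ρ₁ : ℝ)) = mittagLeffler ρ₂ (l * (t ^ ρ₂ : ℝ))) :
    Real.eulerMascheroniConstant * t ^ ρ₁ ≤
      432 * Real.exp 1 / a ^ 4 * (48 * ((1 + ‖l‖ / d) / d)) * Real.log t := by
  have ht0 : 0 < t := one_pos.trans_le ht1
  have hupper := norm_bromwich_mittagLefflerRemainder_sub_le ha0 ha1 ht1 ht hρ₁.le hρ.le hρ₂ hd hl
  have hlower := eulerMascheroniConstant_mul_rpow_neg_mul_sub_le ht1 hρ₁.le hρ.le hρ₂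
  rw [bromwich_mittagLefflerRemainder ha0 ha1 ht0 (hρ₁.trans hρ) hρ₂ hd hl,
    bromwich_mittagLefflerRemainder ha0 ha1 ht0 hρ₁ (hρ.le.trans hρ₂) hd hl, heq,
    add_sub_add_left_eq_sub, ← ofReal_sub, norm_real, Real.norm_eq_abs, abs_sub_comm] at hupper
  have hchain := (hlower.trans (le_abs_self _)).trans hupper
  rw [Real.rpow_neg ht0.le] at hchain
  have hpos : 0 < ((t ^ ρ₁)⁻¹) ^ 2 * (ρ₂ - ρ₁) := mul_pos (by positivity) (sub_pos.2 hρ)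
  refine le_of_mul_le_mul_right ?_ hpos
  calc Real.eulerMascheroniConstant * t ^ ρ₁ * (((t ^ ρ₁)⁻¹) ^ 2 * (ρ₂ - ρ₁))
      = Real.eulerMascheroniConstant * (t ^ ρ₁)⁻¹ * (ρ₂ - ρ₁) := by field_simp
    _ ≤ _ := hchain
    _ = _ := by ring

lemma eventually_injOn_mittagLeffler (hβ : 0 < β) (hl : l.re < 0) :
    ∀ᶠ t : ℝ in atTop,
      InjOn (fun ρ : ℝ ↦ mittagLeffler ρ (l * (t ^ ρ : ℝ))) (Icc β 1) := by
  obtain ⟨a, d, ha0, ha1, hd, hdist⟩ := exists_sector_forall_le_norm_sub hl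
  have hγ : 0 < Real.eulerMascheroniConstant :=
    one_half_pos.trans Real.one_half_lt_eulerMascheroniConstant
  filter_upwards [eventually_mul_log_lt_rpow hβ
      (432 * Real.exp 1 / a ^ 4 * (48 * ((1 + ‖l‖ / d) / d)) / Real.eulerMascheroniConstant),
    eventually_ge_atTop 1, Real.tendsto_log_atTop.eventually_ge_atTop 1] with t hlarge ht1 hlog
  intro ρ₁ hρ₁ ρ₂ hρ₂ heq
  by_contra hne
  wlog hlt : ρ₁ < ρ₂ generalizing ρ₁ ρ₂
  · exact this hρ₂ hρ₁ heq.symm (Ne.symm hne) (lt_of_le_of_ne (not_lt.1 hlt) (Ne.symm hne))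
  have hle := eulerMascheroniConstant_mul_rpow_le_of_mittagLeffler_eq ha0 ha1 ht1 hlog
    (hβ.trans_le hρ₁.1) hlt hρ₂.2 hd hdist heq
  have hmono : t ^ β ≤ t ^ ρ₁ := Real.rpow_le_rpow_of_exponent_le ht1 hρ₁.1
  rw [div_mul_eq_mul_div, div_lt_iff₀' hγ] at hlarge
  exact (hle.trans_lt hlarge).not_ge (by gcongr)

end Injectivity

/-- For `0 < β₀ < 1` and `Re λ < 0` there is `T₀ > 1` such that for all `t₀ ≥ T₀`:
any value `b` attained by `ρ ↦ E_ρ(λ t₀^ρ)` on `[β₀, 1)` is attained at a *unique*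
point `ρ* ∈ [β₀, 1]`. -/
theorem caputo_unique_order (β₀ : ℝ) (hβ₀ : 0 < β₀) (hβ₀1 : β₀ < 1)
    (l : ℂ) (hl : l.re < 0) :
    ∃ T₀ : ℝ, 1 < T₀ ∧ ∀ t₀ : ℝ, T₀ ≤ t₀ →
      ∀ b ∈ (fun ρ : ℝ => mittagLeffler ρ (l * ((t₀ ^ ρ : ℝ) : ℂ))) '' Set.Ico β₀ 1,
        ∃! ρ : ℝ, ρ ∈ Set.Icc β₀ 1 ∧
          mittagLeffler ρ (l * ((t₀ ^ ρ : ℝ) : ℂ)) = b := by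
  obtain ⟨T₀, hinj, hT₀⟩ := ((eventually_forall_ge_atTop.2
    (eventually_injOn_mittagLeffler hβ₀ hl)).and (eventually_gt_atTop 1)).exists
  refine ⟨T₀, hT₀, fun t₀ ht₀ b hb ↦ ?_⟩
  obtain ⟨ρ, hρ, rfl⟩ := hb
  exact ⟨ρ, ⟨Ico_subset_Icc_self hρ, rfl⟩, fun σ hσ ↦
    hinj t₀ ht₀ hσ.1 (Ico_subset_Icc_self hρ) hσ.2⟩
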